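/- If there exists a constant C > 0 such that R_2(x) ≤ C·x^{1/4} for all sufficiently large x, or R_2(x) ≥ −C·x^{1/4} for all sufficiently large x, then the Riemann hypothesis holds, i.e., all nontrivial zeros of ζ have real part 1/2. -/

import Mathlib

open Filter MeasureTheory Finset

/-- `n` is `k`-free: no `d^k` with `d > 1` divides `n`. -/
def KFree (k n : ℕ) : Prop := ∀ d : ℕ, 1 < d → ¬ d ^ k ∣ n

open Classical in
/-- `Q k x` = number of `k`-free positive integers not exceeding `x`. -/
noncomputable def Qf (k : ℕ) (x : ℝ) : ℕ :=
  ((Finset.Icc 1 ⌊x⌋₊).filter fun n => KFree k n).card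

/-- `R k x = Q_k(x) - x / ζ(k)`. -/
noncomputable def Rf (k : ℕ) (x : ℝ) : ℝ :=
  (Qf k x : ℝ) - x / (riemannZeta k).re

/-!
Write `M(s)` for the Mellin transform of `R_k` over `(1, ∞)`. For `Re s > 1` it equals
`ζ(s) / (s ζ(k s)) - 1 / (ζ(k) (s - 1))`, which is meromorphic. If `R_k(x) ≤ C x ^ θ` (or `≥`)
for large `x`, then `± R_k` differs from a multiple of `x ^ θ` by a function of constant sign, and
the continuation has no poles on the real axis to the right of `θ`, so by Landau's theorem `M`
converges in `Re s > θ`. Hence a zero `ρ` of `ζ` with `k θ < Re ρ < 1` cannot give a pole at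
`ρ / k`, that is, `ζ(ρ / k) = 0`.

By the functional equation `1 - ρ / k` is again a zero, again to the right of `k θ`. Iterating
`ρ ↦ 1 - ρ / k` produces zeros converging to `k / (k + 1)`, whereas `ζ` is negative on `(0, 1)`.
-/

open ProbabilityTheory Topology

section Landau

variable {Ω : Type*} [MeasurableSpace Ω] {μ : Measure Ω} {X : Ω → ℝ}

lemma integrable_of_hasSum_of_nonneg {ι : Type*} [Countable ι] {F : ι → Ω → ℝ} {f : Ω → ℝ}
    (hF : ∀ i, Integrable (F i) μ) (hF0 : ∀ i, 0 ≤ᵐ[μ] F i)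
    (hsum : Summable fun i ↦ ∫ ω, F i ω ∂μ) (hf : ∀ᵐ ω ∂μ, HasSum (F · ω) (f ω)) :
    Integrable f μ := by
  have hf0 : 0 ≤ᵐ[μ] f := by
    filter_upwards [ae_all_iff.mpr hF0, hf] with ω hω0 hω using hω.nonneg hω0
  have hf_tsum : ∀ᵐ ω ∂μ, ENNReal.ofReal (f ω) = ∑' i, ENNReal.ofReal (F i ω) := by
    filter_upwards [ae_all_iff.mpr hF0, hf] with ω hω0 hω
    rw [← hω.tsum_eq, ENNReal.ofReal_tsum_of_nonneg hω0 hω.summable]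
  have hf_meas : AEStronglyMeasurable f μ :=
    aestronglyMeasurable_of_tendsto_ae atTop
      (fun s ↦ s.aestronglyMeasurable_fun_sum fun i _ ↦ (hF i).aestronglyMeasurable) hf
  refine ⟨hf_meas, ?_⟩
  rw [hasFiniteIntegral_iff_ofReal hf0, lintegral_congr_ae hf_tsum,
    lintegral_tsum fun i ↦ (hF i).aemeasurable.ennreal_ofReal]
  simp_rw [← ofReal_integral_eq_lintegral_ofReal (hF _) (hF0 _)]
  exact hsum.tsum_ofReal_lt_top

lemma hasSum_pow_mul_exp (c t x : ℝ) :
    HasSum (fun n : ℕ ↦ (n.factorial : ℝ)⁻¹ * t ^ n * (x ^ n * Real.exp (c * x)))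
      (Real.exp ((c + t) * x)) := by
  have h := (NormedSpace.expSeries_div_hasSum_exp (t * x)).mul_right (Real.exp (c * x))
  rw [← Real.exp_eq_exp_ℝ, ← Real.exp_add, ← add_mul, add_comm t c] at h
  refine h.congr_fun fun n ↦ ?_
  rw [mul_pow]
  ring

lemma iteratedDeriv_complexMGF_ofReal {c : ℝ} (hc : c ∈ interior (integrableExpSet X μ)) (n : ℕ) :
    iteratedDeriv n (complexMGF X μ) c = ((∫ ω, X ω ^ n * Real.exp (c * X ω) ∂μ : ℝ) : ℂ) := by
  rw [iteratedDeriv_complexMGF (by simpa using hc), ← integral_complex_ofReal]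
  push_cast
  rfl

/-- Since `X ≥ 0`, the Taylor series of the extension at `c`, evaluated at `c + t`, has nonnegative
terms, and summing it under the integral sign gives `∫ exp ((c + t) X)`. -/
lemma add_mem_integrableExpSet_of_differentiableOn_ball (hX : 0 ≤ᵐ[μ] X) {c r t : ℝ}
    (hc : c ∈ interior (integrableExpSet X μ)) {H : ℂ → ℂ}
    (hH : DifferentiableOn ℂ H (Metric.ball (c : ℂ) r)) (hHX : complexMGF X μ =ᶠ[𝓝 (c : ℂ)] H)
    (ht : 0 ≤ t) (htr : t < r) : c + t ∈ integrableExpSet X μ := by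
  refine integrable_of_hasSum_of_nonneg (fun n ↦
    (integrable_pow_mul_exp_of_mem_interior_integrableExpSet hc n).const_mul _) (fun n ↦ ?_) ?_
    (ae_of_all _ fun ω ↦ hasSum_pow_mul_exp c t (X ω))
  · filter_upwards [hX] with ω (hω : 0 ≤ X ω)
    simp only [Pi.zero_apply]
    positivity
  · have hmem : ((c + t : ℝ) : ℂ) ∈ Metric.ball (c : ℂ) r := by simp [abs_of_nonneg ht, htr]
    rw [← Complex.summable_ofReal]
    refine (Complex.hasSum_taylorSeries_on_ball hH hmem).summable.congr fun n ↦ ?_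
    rw [← hHX.iteratedDeriv_eq, iteratedDeriv_complexMGF_ofReal hc, integral_const_mul]
    push_cast
    simp [mul_assoc]

/-- **Landau's theorem**: the abscissa of convergence is a singularity of the transform. -/
theorem exists_gt_mem_integrableExpSet_of_analyticAt (hX : 0 ≤ᵐ[μ] X) {σ : ℝ}
    (hσ : Set.Iio σ ⊆ integrableExpSet X μ) {H : ℂ → ℂ} (hH : AnalyticAt ℂ H σ)
    (hHX : ∀ᶠ z : ℂ in 𝓝 (σ : ℂ), z.re < σ → complexMGF X μ z = H z) :
    ∃ t > σ, t ∈ integrableExpSet X μ := by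
  obtain ⟨δ, hδ, hball⟩ := Metric.eventually_nhds_iff_ball.mp
    (hH.eventually_analyticAt.and hHX)
  have hsub : Metric.ball ((σ - δ / 4 : ℝ) : ℂ) (δ / 2) ⊆ Metric.ball (σ : ℂ) δ := by
    refine Metric.ball_subset_ball' ?_
    rw [Complex.dist_of_im_eq (by simp), Real.dist_eq, Complex.ofReal_re, Complex.ofReal_re,
      abs_of_neg (by linarith)]
    linarith
  have hc : σ - δ / 4 ∈ interior (integrableExpSet X μ) :=
    interior_maximal hσ isOpen_Iio (by simpa using hδ)
  refine ⟨σ - δ / 4 + 3 * δ / 8, by linarith, add_mem_integrableExpSet_of_differentiableOn_ball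
    hX hc (r := δ / 2) (H := H) (fun z hz ↦ ?_) ?_ (by linarith) (by linarith)⟩
  · exact (hball z (hsub hz)).1.differentiableAt.differentiableWithinAt
  · filter_upwards [Metric.ball_mem_nhds ((σ - δ / 4 : ℝ) : ℂ) (half_pos hδ),
      (isOpen_lt Complex.continuous_re continuous_const).mem_nhds
        (show ((σ - δ / 4 : ℝ) : ℂ) ∈ {z : ℂ | z.re < σ} by simpa using hδ)] with z hz hzσ
    exact (hball z (hsub hz)).2 hzσ

lemma eqOn_halfPlane_of_eqOn_halfPlane {f g : ℂ → ℂ} {a b : ℝ}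
    (hf : DifferentiableOn ℂ f {z | z.re < b}) (hg : DifferentiableOn ℂ g {z | z.re < b})
    (hfg : Set.EqOn f g {z | z.re < a}) : Set.EqOn f g {z | z.re < b} := by
  have hopen (c : ℝ) : IsOpen {z : ℂ | z.re < c} := isOpen_lt Complex.continuous_re continuous_const
  have hmem {c : ℝ} (hc : min a b ≤ c) : ((min a b - 1 : ℝ) : ℂ) ∈ {z : ℂ | z.re < c} := by
    simp only [Set.mem_ofPred_eq, Complex.ofReal_re]
    linarith
  exact (hf.analyticOnNhd (hopen b)).eqOn_of_preconnected_of_eventuallyEq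
    (hg.analyticOnNhd (hopen b)) (convex_halfSpace_re_lt b).isPreconnected
    (hmem (min_le_right a b))
    (hfg.eventuallyEq_of_mem ((hopen a).mem_nhds (hmem (min_le_left a b))))

variable {N D : ℂ → ℂ} {a b : ℝ}

lemma eqOn_mul_complexMGF (hb : Set.Iio b ⊆ integrableExpSet X μ)
    (hN : DifferentiableOn ℂ N {z | z.re < b}) (hD : DifferentiableOn ℂ D {z | z.re < b})
    (heq : Set.EqOn (D * complexMGF X μ) N {z | z.re < a}) :
    Set.EqOn (D * complexMGF X μ) N {z | z.re < b} :=
  eqOn_halfPlane_of_eqOn_halfPlane (hD.mul (differentiableOn_complexMGF.mono fun _ hz ↦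
    interior_maximal hb isOpen_Iio hz)) hN heq

lemma mem_integrableExpSet_of_le (hX : 0 ≤ᵐ[μ] X) (hXm : AEMeasurable X μ) {t u : ℝ} (hut : u ≤ t)
    (ht : t ∈ integrableExpSet X μ) : u ∈ integrableExpSet X μ := by
  refine Integrable.mono' ht (by fun_prop) ?_
  filter_upwards [hX] with ω (hω : 0 ≤ X ω)
  rw [Real.norm_eq_abs, Real.abs_exp]
  gcongr

theorem Iio_subset_integrableExpSet (hX : 0 ≤ᵐ[μ] X) (hXm : AEMeasurable X μ)
    (ha : Set.Iio a ⊆ integrableExpSet X μ)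
    (hN : DifferentiableOn ℂ N {z | z.re < b}) (hD : DifferentiableOn ℂ D {z | z.re < b})
    (hD0 : ∀ t : ℝ, t < b → D t ≠ 0) (heq : Set.EqOn (D * complexMGF X μ) N {z | z.re < a}) :
    Set.Iio b ⊆ integrableExpSet X μ := by
  by_contra hcon
  obtain ⟨u, hub, hu⟩ := Set.not_subset.mp hcon
  have hle_u (t) (ht : t ∈ integrableExpSet X μ) : t ≤ u :=
    le_of_not_ge fun hut ↦ hu (mem_integrableExpSet_of_le hX hXm hut ht)
  have hne : (integrableExpSet X μ).Nonempty := ⟨a - 1, ha (by simp)⟩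
  set σ := sSup (integrableExpSet X μ)
  have hσb : σ < b := (csSup_le hne hle_u).trans_lt hub
  have hσ : Set.Iio σ ⊆ integrableExpSet X μ := fun t ht ↦ by
    obtain ⟨v, hv, htv⟩ := exists_lt_of_lt_csSup hne ht
    exact mem_integrableExpSet_of_le hX hXm htv.le hv
  have hnhds : {z : ℂ | z.re < b} ∈ 𝓝 (σ : ℂ) :=
    (isOpen_lt Complex.continuous_re continuous_const).mem_nhds (by simpa using hσb)
  have hsubset : {z : ℂ | z.re < σ} ⊆ {z | z.re < b} := fun z hz ↦ lt_trans hz hσb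
  obtain ⟨t, hσt, ht⟩ := exists_gt_mem_integrableExpSet_of_analyticAt hX hσ
    ((hN.analyticAt hnhds).div (hD.analyticAt hnhds) (hD0 σ hσb)) <| by
      filter_upwards [(hD.analyticAt hnhds).continuousAt.eventually_ne (hD0 σ hσb)] with z hz hzσ
      rw [Pi.div_apply, eq_div_iff hz, mul_comm]
      exact eqOn_mul_complexMGF hσ (hN.mono hsubset) (hD.mono hsubset) heq hzσ
  exact hσt.not_ge (le_csSup ⟨u, hle_u⟩ ht)

end Landau

section TruncatedMellin

/-- The integral `∫ x in (1, ∞), f x * x ^ (-(s + 1))`, that is, the Mellin transform at `-s` of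
the restriction of `f` to `(1, ∞)`. The sign of `s` is the one used for Dirichlet series: the
transform of the summatory function of `a` is `LSeries a s / s`. -/
noncomputable def truncatedMellin (f : ℝ → ℝ) (s : ℂ) : ℂ :=
  ∫ x in Set.Ioi (1 : ℝ), (f x : ℂ) * (x : ℂ) ^ (-(s + 1))

/-- Absolute convergence of the integral defining `truncatedMellin f s`. -/
def TruncatedMellinConvergent (f : ℝ → ℝ) (s : ℂ) : Prop :=
  IntegrableOn (fun x : ℝ ↦ (f x : ℂ) * (x : ℂ) ^ (-(s + 1))) (Set.Ioi 1)

variable {f g : ℝ → ℝ} {s : ℂ}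

lemma ofReal_rpow_mul_cpow {x : ℝ} (hx : 0 < x) (r : ℝ) (s : ℂ) :
    ((x ^ r : ℝ) : ℂ) * (x : ℂ) ^ (-(s + 1)) = (x : ℂ) ^ (r - s - 1) := by
  rw [Complex.ofReal_cpow hx.le, ← Complex.cpow_add _ _ (by exact_mod_cast hx.ne')]
  ring_nf

lemma truncatedMellinConvergent_rpow {r : ℝ} (hs : r < s.re) :
    TruncatedMellinConvergent (fun x ↦ x ^ r) s :=
  (integrableOn_Ioi_cpow_of_lt (a := r - s - 1) (by simp; linarith) zero_lt_one).congr_fun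
    (fun _ hx ↦ (ofReal_rpow_mul_cpow (zero_lt_one.trans hx) r s).symm) measurableSet_Ioi

lemma truncatedMellin_rpow {r : ℝ} (hs : r < s.re) :
    truncatedMellin (fun x ↦ x ^ r) s = 1 / (s - r) := by
  rw [truncatedMellin, setIntegral_congr_fun measurableSet_Ioi
    fun x hx ↦ ofReal_rpow_mul_cpow (zero_lt_one.trans hx) r s,
    integral_Ioi_cpow_of_lt (by simp; linarith) zero_lt_one, Complex.ofReal_one, Complex.one_cpow,
    ← neg_div_neg_eq]
  ring

lemma truncatedMellinConvergent_of_abs_le (hf : Measurable f) {K r : ℝ}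
    (hfK : ∀ x > 1, |f x| ≤ K * x ^ r) (hs : r < s.re) : TruncatedMellinConvergent f s := by
  refine ((truncatedMellinConvergent_rpow hs).norm.const_mul K).mono' (by fun_prop) ?_
  filter_upwards [ae_restrict_mem measurableSet_Ioi] with x hx
  have hx0 : (0 : ℝ) < x := zero_lt_one.trans hx
  rw [norm_mul, norm_mul, Complex.norm_real, Complex.norm_real, ← mul_assoc, Real.norm_eq_abs,
    Real.norm_of_nonneg (by positivity)]
  gcongr
  exact hfK x hx

lemma TruncatedMellinConvergent.const_mul (hf : TruncatedMellinConvergent f s) (c : ℝ) :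
    TruncatedMellinConvergent (fun x ↦ c * f x) s := by
  simp only [TruncatedMellinConvergent, Complex.ofReal_mul, mul_assoc]
  exact Integrable.const_mul hf (c : ℂ)

lemma TruncatedMellinConvergent.sub (hf : TruncatedMellinConvergent f s)
    (hg : TruncatedMellinConvergent g s) : TruncatedMellinConvergent (fun x ↦ f x - g x) s := by
  simp only [TruncatedMellinConvergent, Complex.ofReal_sub, sub_mul]
  exact Integrable.sub hf hg

lemma truncatedMellin_const_mul (c : ℝ) (f : ℝ → ℝ) (s : ℂ) :
    truncatedMellin (fun x ↦ c * f x) s = c * truncatedMellin f s := by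
  simp only [truncatedMellin, Complex.ofReal_mul, mul_assoc, integral_const_mul]

lemma truncatedMellin_neg (f : ℝ → ℝ) (s : ℂ) :
    truncatedMellin (fun x ↦ -f x) s = -truncatedMellin f s := by
  simpa using truncatedMellin_const_mul (-1) f s

lemma truncatedMellin_sub (hf : TruncatedMellinConvergent f s)
    (hg : TruncatedMellinConvergent g s) :
    truncatedMellin (fun x ↦ f x - g x) s = truncatedMellin f s - truncatedMellin g s := by
  simp only [truncatedMellin, Complex.ofReal_sub, sub_mul]
  exact integral_sub hf hg

/-- The measure on `(1, ∞)` with density `A x / x`, for which `log` is a nonnegative random variable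
whose complex moment generating function at `-s` is `truncatedMellin A s` when `A ≥ 0`. -/
noncomputable def mellinMeasure (A : ℝ → ℝ) : Measure ℝ :=
  (volume.restrict (Set.Ioi 1)).withDensity fun x ↦ ENNReal.ofReal (A x / x)

lemma log_nonneg_ae_mellinMeasure (A : ℝ → ℝ) : 0 ≤ᵐ[mellinMeasure A] Real.log := by
  refine (withDensity_absolutelyContinuous _ _).ae_le ?_
  filter_upwards [ae_restrict_mem measurableSet_Ioi] with x hx
  exact Real.log_nonneg (le_of_lt hx)

variable {A : ℝ → ℝ}

lemma toReal_ofReal_div_smul_cexp_log {x : ℝ} (hx : 0 < x) (hAx : 0 ≤ A x) (s : ℂ) :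
    (ENNReal.ofReal (A x / x)).toReal • Complex.exp (-s * Real.log x) =
      (A x : ℂ) * (x : ℂ) ^ (-(s + 1)) := by
  have hx0 : (x : ℂ) ≠ 0 := by exact_mod_cast hx.ne'
  rw [ENNReal.toReal_ofReal (div_nonneg hAx hx.le), Complex.real_smul, neg_add',
    Complex.cpow_sub _ _ hx0, Complex.cpow_one, Complex.cpow_def_of_ne_zero hx0,
    ← Complex.ofReal_log hx.le, mul_comm (-s)]
  push_cast
  ring

lemma truncatedMellin_eq_complexMGF (hA : Measurable A) (hA0 : ∀ x > 1, 0 ≤ A x) (s : ℂ) :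
    truncatedMellin A s = complexMGF Real.log (mellinMeasure A) (-s) := by
  rw [complexMGF, mellinMeasure, integral_withDensity_eq_integral_toReal_smul (by fun_prop)
    (ae_of_all _ fun _ ↦ ENNReal.ofReal_lt_top)]
  exact setIntegral_congr_fun measurableSet_Ioi fun x hx ↦
    (toReal_ofReal_div_smul_cexp_log (zero_lt_one.trans hx) (hA0 x hx) s).symm

lemma TruncatedMellinConvergent.neg_re_mem_integrableExpSet (hA : Measurable A)
    (hA0 : ∀ x > 1, 0 ≤ A x) (h : TruncatedMellinConvergent A s) :
    -s.re ∈ integrableExpSet Real.log (mellinMeasure A) := by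
  change Integrable _ _
  rw [mellinMeasure, integrable_withDensity_iff_integrable_smul' (by fun_prop)
    (ae_of_all _ fun _ ↦ ENNReal.ofReal_lt_top)]
  refine h.norm.congr ?_
  filter_upwards [ae_restrict_mem measurableSet_Ioi] with x hx
  rw [← toReal_ofReal_div_smul_cexp_log (zero_lt_one.trans hx) (hA0 x hx), norm_smul,
    Complex.norm_exp, Real.norm_of_nonneg ENNReal.toReal_nonneg, smul_eq_mul]
  simp

lemma truncatedMellin_ofReal_re_nonneg (hA : Measurable A) (hA0 : ∀ x > 1, 0 ≤ A x) (t : ℝ) :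
    0 ≤ (truncatedMellin A t).re := by
  rw [truncatedMellin_eq_complexMGF hA hA0, ← Complex.ofReal_neg, re_complexMGF_ofReal]
  exact mgf_nonneg

variable {N D : ℂ → ℂ} {a θ : ℝ}

theorem mul_truncatedMellin_eq_of_nonneg (hA : Measurable A) (hA0 : ∀ x > 1, 0 ≤ A x)
    (hconv : ∀ s : ℂ, a < s.re → TruncatedMellinConvergent A s)
    (hN : DifferentiableOn ℂ N {s | θ < s.re}) (hD : DifferentiableOn ℂ D {s | θ < s.re})
    (hD0 : ∀ t : ℝ, θ < t → D t ≠ 0)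
    (heq : ∀ s : ℂ, a < s.re → D s * truncatedMellin A s = N s) (hs : θ < s.re) :
    D s * truncatedMellin A s = N s := by
  have hmaps : Set.MapsTo (fun z : ℂ ↦ -z) {z | z.re < -θ} {s | θ < s.re} := fun z hz ↦ by
    simpa [lt_neg] using hz
  have hN' : DifferentiableOn ℂ (fun z ↦ N (-z)) {z | z.re < -θ} :=
    hN.comp differentiable_neg.differentiableOn hmaps
  have hD' : DifferentiableOn ℂ (fun z ↦ D (-z)) {z | z.re < -θ} :=
    hD.comp differentiable_neg.differentiableOn hmaps
  have ha : Set.Iio (-a) ⊆ integrableExpSet Real.log (mellinMeasure A) := fun t ht ↦ by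
    simpa using (hconv (-t : ℝ) (by simpa [lt_neg] using ht)).neg_re_mem_integrableExpSet hA hA0
  have heq' : Set.EqOn ((fun z ↦ D (-z)) * complexMGF Real.log (mellinMeasure A))
      (fun z ↦ N (-z)) {z | z.re < -a} := fun z hz ↦ by
    simpa [truncatedMellin_eq_complexMGF hA hA0] using heq (-z) (by simpa [lt_neg] using hz)
  have hθ : Set.Iio (-θ) ⊆ integrableExpSet Real.log (mellinMeasure A) :=
    Iio_subset_integrableExpSet (log_nonneg_ae_mellinMeasure A) (by fun_prop) ha hN' hD'
      (fun t ht ↦ by simpa using hD0 (-t) (lt_neg.mpr ht)) heq'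
  simpa [truncatedMellin_eq_complexMGF hA hA0] using
    eqOn_mul_complexMGF hθ hN' hD' heq' (show (-s).re < -θ by simpa using hs)

lemma exists_forall_le_mul_rpow {K r C : ℝ} (hfK : ∀ x > 1, |f x| ≤ K * x ^ r)
    (hle : ∀ᶠ x in atTop, f x ≤ C * x ^ θ) : ∃ B, ∀ x > 1, f x ≤ B * x ^ θ := by
  obtain ⟨Y, hY⟩ := eventually_atTop.mp hle
  refine ⟨max C (|K| * Y ^ |r - θ|), fun x hx ↦ ?_⟩
  have hx0 : 0 < x := zero_lt_one.trans hx
  rcases le_total Y x with hYx | hxY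
  · exact (hY x hYx).trans (by gcongr; exact le_max_left _ _)
  calc f x ≤ K * x ^ r := (le_abs_self _).trans (hfK x hx)
    _ ≤ |K| * x ^ r := by gcongr; exact le_abs_self K
    _ = |K| * x ^ (r - θ) * x ^ θ := by rw [mul_assoc, ← Real.rpow_add hx0, sub_add_cancel]
    _ ≤ |K| * x ^ |r - θ| * x ^ θ := by gcongr; exacts [hx.le, le_abs_self _]
    _ ≤ max C (|K| * Y ^ |r - θ|) * x ^ θ := by
      gcongr
      exact le_max_of_le_right (by gcongr)

/-- The meromorphic continuation `N / D` of the transform has no poles in `Re s > θ`, because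
Landau's theorem applies to the transform of the nonnegative function `B x ^ θ - f x`. -/
theorem numerator_eq_zero_of_eventually_le (hf : Measurable f) {K r C : ℝ}
    (hfK : ∀ x > 1, |f x| ≤ K * x ^ r) (hN : DifferentiableOn ℂ N {s | θ < s.re})
    (hD : DifferentiableOn ℂ D {s | θ < s.re}) (hD0 : ∀ t : ℝ, θ < t → D t ≠ 0)
    (heq : ∀ s : ℂ, r < s.re → D s * truncatedMellin f s = N s)
    (hle : ∀ᶠ x in atTop, f x ≤ C * x ^ θ) (hs : θ < s.re) (hDs : D s = 0) : N s = 0 := by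
  obtain ⟨B, hB⟩ := exists_forall_le_mul_rpow hfK hle
  have hconv_pow {z : ℂ} (hz : θ < z.re) : TruncatedMellinConvergent (fun x ↦ B * x ^ θ) z :=
    (truncatedMellinConvergent_rpow hz).const_mul B
  have hconv {z : ℂ} (hz : r < z.re) : TruncatedMellinConvergent f z :=
    truncatedMellinConvergent_of_abs_le hf hfK hz
  have hne {z : ℂ} (hz : θ < z.re) : z - θ ≠ 0 := by
    rw [sub_ne_zero]
    rintro rfl
    simp at hz
  have hcont : (s - θ) * D s * truncatedMellin (fun x ↦ B * x ^ θ - f x) s =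
      B * D s - (s - θ) * N s := by
    refine mul_truncatedMellin_eq_of_nonneg (a := max θ r) (θ := θ) (by fun_prop)
      (D := fun z ↦ (z - θ) * D z) (N := fun z ↦ B * D z - (z - θ) * N z)
      (fun x hx ↦ sub_nonneg.mpr (hB x hx)) (fun z hz ↦ ?_) (by fun_prop) (by fun_prop)
      (fun t ht ↦ mul_ne_zero (hne (by simpa using ht)) (hD0 t ht)) (fun z hz ↦ ?_) hs
    · exact (hconv_pow (max_lt_iff.mp hz).1).sub (hconv (max_lt_iff.mp hz).2)
    · obtain ⟨hzθ, hzr⟩ := max_lt_iff.mp hz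
      rw [truncatedMellin_sub (hconv_pow hzθ) (hconv hzr), truncatedMellin_const_mul,
        truncatedMellin_rpow hzθ, ← heq z hzr]
      field_simp [hne hzθ]
  simpa [hDs, hne hs] using hcont

theorem numerator_eq_zero_of_eventually_ge (hf : Measurable f) {K r C : ℝ}
    (hfK : ∀ x > 1, |f x| ≤ K * x ^ r) (hN : DifferentiableOn ℂ N {s | θ < s.re})
    (hD : DifferentiableOn ℂ D {s | θ < s.re}) (hD0 : ∀ t : ℝ, θ < t → D t ≠ 0)
    (heq : ∀ s : ℂ, r < s.re → D s * truncatedMellin f s = N s)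
    (hge : ∀ᶠ x in atTop, C * x ^ θ ≤ f x) (hs : θ < s.re) (hDs : D s = 0) : N s = 0 := by
  rw [← neg_eq_zero]
  exact numerator_eq_zero_of_eventually_le (f := fun x ↦ -f x) (C := -C) (N := fun z ↦ -N z) hf.neg
    (by simpa using hfK) hN.neg hD hD0
    (fun z hz ↦ by rw [truncatedMellin_neg, mul_neg, heq z hz])
    (hge.mono fun x hx ↦ by simpa using hx) hs hDs

end TruncatedMellin

section SummatoryFunction

variable {a : ℕ → ℝ} {s : ℂ}

lemma measurable_sum_Icc_floor (a : ℕ → ℝ) : Measurable fun x : ℝ ↦ ∑ n ∈ Icc 1 ⌊x⌋₊, a n :=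
  (measurable_from_nat (f := fun m ↦ ∑ n ∈ Icc 1 m, a n)).comp Nat.measurable_floor

lemma abs_sum_Icc_le (ha0 : ∀ n, 0 ≤ a n) (ha1 : ∀ n, a n ≤ 1) (m : ℕ) :
    |∑ n ∈ Icc 1 m, a n| ≤ m := by
  rw [abs_of_nonneg (sum_nonneg fun n _ ↦ ha0 n)]
  simpa using sum_le_card_nsmul (Icc 1 m) a 1 fun n _ ↦ ha1 n

lemma abs_sum_Icc_floor_le (ha0 : ∀ n, 0 ≤ a n) (ha1 : ∀ n, a n ≤ 1) {x : ℝ} (hx : 0 ≤ x) :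
    |∑ n ∈ Icc 1 ⌊x⌋₊, a n| ≤ x :=
  (abs_sum_Icc_le ha0 ha1 _).trans (Nat.floor_le hx)

lemma LSeries_eq_mul_truncatedMellin (ha0 : ∀ n, 0 ≤ a n) (ha1 : ∀ n, a n ≤ 1) (hs : 1 < s.re) :
    LSeries (fun n ↦ a n) s = s * truncatedMellin (fun x ↦ ∑ n ∈ Icc 1 ⌊x⌋₊, a n) s := by
  have hO : (fun m : ℕ ↦ ∑ n ∈ Icc 1 m, a n) =O[atTop] fun m ↦ (m : ℝ) ^ (1 : ℝ) :=
    .of_bound 1 (Eventually.of_forall fun m ↦ by simpa using abs_sum_Icc_le ha0 ha1 m)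
  simp only [LSeries_eq_mul_integral_of_nonneg a zero_le_one hs hO ha0, truncatedMellin,
    Complex.ofReal_sum]

lemma truncatedMellin_sum_sub_mul (ha0 : ∀ n, 0 ≤ a n) (ha1 : ∀ n, a n ≤ 1) (c : ℝ)
    (hs : 1 < s.re) :
    truncatedMellin (fun x ↦ ∑ n ∈ Icc 1 ⌊x⌋₊, a n - c * x) s =
      LSeries (fun n ↦ a n) s / s - c / (s - 1) := by
  have hs0 : s ≠ 0 := Complex.ne_zero_of_re_pos (zero_lt_one.trans hs)
  have hconv : TruncatedMellinConvergent (fun x ↦ x) s := by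
    simpa using truncatedMellinConvergent_rpow hs
  have hid : truncatedMellin (fun x ↦ x) s = 1 / (s - 1) := by simpa using truncatedMellin_rpow hs
  have hsum : TruncatedMellinConvergent (fun x ↦ ∑ n ∈ Icc 1 ⌊x⌋₊, a n) s :=
    truncatedMellinConvergent_of_abs_le (measurable_sum_Icc_floor a) (K := 1) (r := 1)
      (fun x hx ↦ by simpa using abs_sum_Icc_floor_le ha0 ha1 (zero_lt_one.trans hx).le) hs
  rw [truncatedMellin_sub hsum (hconv.const_mul c), truncatedMellin_const_mul, hid,
    LSeries_eq_mul_truncatedMellin ha0 ha1 hs, mul_div_cancel_left₀ _ hs0, mul_one_div]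

end SummatoryFunction

section Zeta

lemma riemannZeta₁_of_ne_one {s : ℂ} (hs : s ≠ 1) : riemannZeta₁ s = (s - 1) * riemannZeta s := by
  rw [riemannZeta_eq_inv_sub_mul hs, mul_inv_cancel_left₀ (sub_ne_zero.mpr hs)]

lemma truncatedMellin_fract {s : ℂ} (hs : 1 < s.re) :
    truncatedMellin Int.fract s = 1 / (s - 1) - riemannZeta s / s := by
  have hfract (x : ℝ) (hx : 1 < x) :
      (Int.fract x : ℝ) = -(∑ n ∈ Icc 1 ⌊x⌋₊, (fun _ ↦ 1 : ℕ → ℝ) n - 1 * x) := by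
    simp [← Int.self_sub_floor, natCast_floor_eq_intCast_floor (zero_lt_one.trans hx).le]
  have hζ := truncatedMellin_sum_sub_mul (a := fun _ ↦ 1) (by simp) (by simp) 1 hs
  have hL : LSeries (fun _ ↦ ((1 : ℝ) : ℂ)) s = riemannZeta s := by
    rw [← LSeries_one_eq_riemannZeta hs]
    simp [Pi.one_def]
  rw [truncatedMellin, setIntegral_congr_fun measurableSet_Ioi fun x hx ↦ by rw [hfract x hx],
    ← truncatedMellin, truncatedMellin_neg, hζ, hL]
  simp

lemma mul_truncatedMellin_fract {s : ℂ} (hs : 0 < s.re) :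
    s * truncatedMellin Int.fract s = 1 - riemannZeta₀ s := by
  refine mul_truncatedMellin_eq_of_nonneg (a := 1) (D := id) (N := fun z ↦ 1 - riemannZeta₀ z)
    measurable_fract (fun x _ ↦ Int.fract_nonneg x) (fun z hz ↦ ?_) (by fun_prop) (by fun_prop)
    (fun t ht ↦ by simpa using ht.ne') (fun z hz ↦ ?_) hs
  · exact truncatedMellinConvergent_of_abs_le measurable_fract (K := 1) (r := 0)
      (fun x _ ↦ by simpa [Int.abs_fract] using (Int.fract_lt_one x).le) (zero_lt_one.trans hz)
  · have hz0 : z ≠ 0 := Complex.ne_zero_of_re_pos (zero_lt_one.trans hz)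
    have hz1 : z ≠ 1 := by rintro rfl; simp at hz
    rw [truncatedMellin_fract hz, riemannZeta_eq_inv_sub_add hz1, id]
    field_simp [sub_ne_zero.mpr hz1]
    ring

lemma riemannZeta_re_neg_of_mem_Ioo {t : ℝ} (ht0 : 0 < t) (ht1 : t < 1) :
    (riemannZeta t).re < 0 := by
  have hζ₀ : riemannZeta₀ t = 1 - t * truncatedMellin Int.fract t := by
    rw [mul_truncatedMellin_fract (by simpa using ht0), sub_sub_cancel]
  have hfract := truncatedMellin_ofReal_re_nonneg measurable_fract
    (fun x _ ↦ Int.fract_nonneg x) t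
  have hinv : (t - 1)⁻¹ + 1 < 0 := by
    have hinv_eq : (t - 1)⁻¹ + 1 = t / (t - 1) := by
      field_simp [(sub_neg.mpr ht1).ne]
      ring
    rw [hinv_eq]
    exact div_neg_of_pos_of_neg ht0 (sub_neg.mpr ht1)
  rw [riemannZeta_eq_inv_sub_add (by exact_mod_cast ht1.ne), hζ₀, ← Complex.ofReal_one,
    ← Complex.ofReal_sub, ← Complex.ofReal_inv, Complex.add_re, Complex.sub_re,
    Complex.re_ofReal_mul, Complex.ofReal_re, Complex.ofReal_re]
  nlinarith

lemma riemannZeta₁_ofReal_ne_zero {t : ℝ} (ht : 0 < t) : riemannZeta₁ t ≠ 0 := by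
  rcases eq_or_ne t 1 with rfl | h1
  · simp
  have h1' : (t : ℂ) ≠ 1 := by exact_mod_cast h1
  rw [riemannZeta₁_of_ne_one h1']
  refine mul_ne_zero (sub_ne_zero.mpr h1') ?_
  rcases lt_or_gt_of_ne h1 with hlt | hgt
  · exact fun h ↦ (riemannZeta_re_neg_of_mem_Ioo ht hlt).ne (by simp [h])
  · exact riemannZeta_ne_zero_of_one_lt_re (by simpa using hgt)

lemma riemannZeta_one_sub_eq_zero {s : ℂ} (hs : riemannZeta s = 0) (h0 : 0 < s.re)
    (h1 : s.re < 1) : riemannZeta (1 - s) = 0 := by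
  rw [riemannZeta_one_sub, hs, mul_zero]
  · rintro n rfl
    simp only [Complex.neg_re, Complex.natCast_re] at h0
    linarith [n.cast_nonneg (α := ℝ)]
  · rintro rfl
    simp at h1

lemma tendsto_iterate_one_sub_div {k : ℂ} (hk : 1 < ‖k‖) (z : ℂ) :
    Tendsto (fun n ↦ (fun w ↦ 1 - w / k)^[n] z) atTop (𝓝 (k / (k + 1))) := by
  have hk0 : k ≠ 0 := norm_pos_iff.mp (zero_lt_one.trans hk)
  have hk1 : k + 1 ≠ 0 := fun h ↦ by simp [eq_neg_of_add_eq_zero_left h] at hk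
  have hform (n : ℕ) : (fun w ↦ 1 - w / k)^[n] z =
      (-k⁻¹) ^ n * (z - k / (k + 1)) + k / (k + 1) := by
    induction n with
    | zero => simp
    | succ n ih =>
      rw [Function.iterate_succ_apply', ih, pow_succ]
      generalize (-k⁻¹) ^ n = c
      field_simp
      ring
  have hpow : Tendsto (fun n : ℕ ↦ (-k⁻¹) ^ n) atTop (𝓝 0) :=
    tendsto_pow_atTop_nhds_zero_of_norm_lt_one (by simpa using inv_lt_one_of_one_lt₀ hk)
  simpa [hform] using (hpow.mul_const (z - k / (k + 1))).add_const (k / (k + 1))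

theorem riemannZeta_ne_zero_of_forall_div_eq_zero {k : ℕ} (hk : 1 < k) {σ : ℝ} (hσ0 : 0 ≤ σ)
    (hσk : σ ≤ 1 - 1 / k)
    (hdiv : ∀ ρ : ℂ, riemannZeta ρ = 0 → σ < ρ.re → ρ.re < 1 → riemannZeta (ρ / k) = 0)
    {ρ : ℂ} (hσρ : σ < ρ.re) (hρ1 : ρ.re < 1) : riemannZeta ρ ≠ 0 := by
  intro hρ
  have hk0 : (0 : ℝ) < k := by positivity
  have hk2 : (1 / k : ℝ) ≤ 1 / 2 := by gcongr; exact_mod_cast hk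
  have hzero (n : ℕ) : riemannZeta ((fun w ↦ 1 - w / (k : ℂ))^[n] ρ) = 0 ∧
      σ < ((fun w ↦ 1 - w / (k : ℂ))^[n] ρ).re ∧ ((fun w ↦ 1 - w / (k : ℂ))^[n] ρ).re < 1 := by
    induction n with
    | zero => exact ⟨hρ, hσρ, hρ1⟩
    | succ n ih =>
      rw [Function.iterate_succ_apply']
      obtain ⟨ih0, ihσ, ih1⟩ := ih
      generalize (fun w ↦ 1 - w / (k : ℂ))^[n] ρ = u at ih0 ihσ ih1
      have hpos : 0 < u.re / k := div_pos (hσ0.trans_lt ihσ) hk0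
      have hlt : u.re / k < 1 / k := by gcongr
      refine ⟨riemannZeta_one_sub_eq_zero (hdiv u ih0 ihσ ih1) ?_ ?_, ?_, ?_⟩ <;>
        simp only [Complex.sub_re, Complex.one_re, Complex.div_natCast_re] <;> linarith
  set t : ℝ := k / (k + 1)
  have ht : t ∈ Set.Ioo 0 1 := ⟨by positivity, by rw [div_lt_one (by positivity)]; linarith⟩
  have hlim : Tendsto (fun n ↦ (fun w ↦ 1 - w / (k : ℂ))^[n] ρ) atTop (𝓝 (t : ℂ)) := by
    simpa [t] using tendsto_iterate_one_sub_div (k := k) (by simpa using hk) ρ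
  have hcont : ContinuousAt riemannZeta t :=
    (differentiableAt_riemannZeta (by exact_mod_cast ht.2.ne)).continuousAt
  have hζt : riemannZeta t = 0 :=
    tendsto_nhds_unique (hcont.tendsto.comp hlim) (tendsto_const_nhds.congr fun n ↦
      (hzero n).1.symm)
  exact (riemannZeta_re_neg_of_mem_Ioo ht.1 ht.2).ne (by simp [hζt])

end Zeta

section KFree

variable {k : ℕ}

lemma not_kFree_zero : ¬ KFree k 0 := fun h ↦ h 2 one_lt_two (dvd_zero _)

lemma kFree_one (hk : k ≠ 0) : KFree k 1 := fun _ hd h ↦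
  (Nat.one_lt_pow hk hd).ne' (Nat.dvd_one.mp h)

lemma kFree_iff_forall_prime {n : ℕ} : KFree k n ↔ ∀ p : ℕ, p.Prime → ¬ p ^ k ∣ n := by
  refine ⟨fun h p hp ↦ h p hp.one_lt, fun h d hd hdn ↦ ?_⟩
  obtain ⟨p, hp, hpd⟩ := Nat.exists_prime_and_dvd hd.ne'
  exact h p hp ((pow_dvd_pow_of_dvd hpd k).trans hdn)

lemma kFree_mul_iff (hk : k ≠ 0) {m n : ℕ} (hmn : m.Coprime n) :
    KFree k (m * n) ↔ KFree k m ∧ KFree k n := by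
  simp only [kFree_iff_forall_prime, ← forall₂_and]
  refine forall₂_congr fun p hp ↦ ?_
  rw [hmn.isPrimePow_dvd_mul (hp.isPrimePow.pow hk), not_or]

lemma kFree_prime_pow_iff {p : ℕ} (hp : p.Prime) {e : ℕ} : KFree k (p ^ e) ↔ e < k := by
  rw [kFree_iff_forall_prime]
  refine ⟨fun h ↦ lt_of_not_ge fun hke ↦ h p hp (pow_dvd_pow p hke), fun he q hq hqp ↦ ?_⟩
  have hk : k ≠ 0 := by omega
  obtain rfl := (Nat.prime_dvd_prime_iff_eq hq hp).mp
    (hq.dvd_of_dvd_pow ((dvd_pow_self q hk).trans hqp))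
  exact he.not_ge ((Nat.pow_dvd_pow_iff_le_right hq.one_lt).mp hqp)

open Classical in
/-- The indicator function of the `k`-free integers; it vanishes at `0`, which is never `k`-free. -/
noncomputable def kFreeIndicator (k n : ℕ) : ℝ := if KFree k n then 1 else 0

lemma kFreeIndicator_nonneg (k n : ℕ) : 0 ≤ kFreeIndicator k n := by
  rw [kFreeIndicator]
  split_ifs <;> simp

lemma kFreeIndicator_le_one (k n : ℕ) : kFreeIndicator k n ≤ 1 := by
  rw [kFreeIndicator]
  split_ifs <;> simp

lemma kFreeIndicator_zero (k : ℕ) : kFreeIndicator k 0 = 0 := if_neg not_kFree_zero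

lemma kFreeIndicator_mul (hk : k ≠ 0) {m n : ℕ} (hmn : m.Coprime n) :
    kFreeIndicator k (m * n) = kFreeIndicator k m * kFreeIndicator k n := by
  classical
  rw [kFreeIndicator, if_congr (kFree_mul_iff hk hmn) rfl rfl, kFreeIndicator, kFreeIndicator,
    ite_zero_mul_ite_zero, one_mul]

lemma kFreeIndicator_prime_pow {p : ℕ} (hp : p.Prime) (e : ℕ) :
    kFreeIndicator k (p ^ e) = if e < k then 1 else 0 := by
  simp only [kFreeIndicator, kFree_prime_pow_iff hp]

lemma tsum_term_kFreeIndicator_prime_pow {p : ℕ} (hp : p.Prime) (s : ℂ) :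
    ∑' e, LSeries.term (fun n ↦ kFreeIndicator k n) s (p ^ e) =
      ∑ e ∈ range k, ((p : ℂ) ^ (-s)) ^ e := by
  have hterm (e : ℕ) : LSeries.term (fun n ↦ kFreeIndicator k n) s (p ^ e) =
      if e ∈ range k then ((p : ℂ) ^ (-s)) ^ e else 0 := by
    have hpow : ((p ^ e : ℕ) : ℂ) ^ (-s) = ((p : ℂ) ^ (-s)) ^ e := by
      rw [Nat.cast_pow, ← Complex.natCast_cpow_natCast_mul, Complex.cpow_nat_mul]
    rw [LSeries.term_def₀ (by simp [kFreeIndicator_zero]), kFreeIndicator_prime_pow hp, hpow]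
    simp only [mem_range]
    split_ifs <;> simp
  rw [tsum_congr hterm, tsum_eq_sum (s := range k) fun e he ↦ if_neg he]
  exact sum_congr rfl fun e he ↦ if_pos he

lemma LSeries_kFreeIndicator_eulerProduct_hasProd (hk : k ≠ 0) {s : ℂ} (hs : 1 < s.re) :
    HasProd (fun p : Nat.Primes ↦ ∑ e ∈ range k, ((p : ℂ) ^ (-s)) ^ e)
      (LSeries (fun n ↦ kFreeIndicator k n) s) := by
  have hterm := LSeries.term_def₀ (f := fun n ↦ (kFreeIndicator k n : ℂ))
    (by simp [kFreeIndicator_zero]) s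
  have hsum : LSeriesSummable (fun n ↦ kFreeIndicator k n) s :=
    LSeriesSummable_of_bounded_of_one_lt_re (m := 1) (fun n _ ↦ by
      simpa [abs_of_nonneg (kFreeIndicator_nonneg k n)] using kFreeIndicator_le_one k n) hs
  have hprod := EulerProduct.eulerProduct_hasProd
    (by simp [kFreeIndicator, kFree_one hk])
    (fun {m n} hmn ↦ by
      rw [hterm, hterm, hterm, kFreeIndicator_mul hk hmn, Nat.cast_mul,
        Complex.natCast_mul_natCast_cpow, Complex.ofReal_mul, mul_mul_mul_comm])
    hsum.norm (LSeries.term_zero _ _)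
  exact hprod.congr_fun fun p ↦ (tsum_term_kFreeIndicator_prime_pow p.2 s).symm

theorem LSeries_kFreeIndicator_mul_riemannZeta (hk : k ≠ 0) {s : ℂ} (hs : 1 < s.re) :
    LSeries (fun n ↦ kFreeIndicator k n) s * riemannZeta (k * s) = riemannZeta s := by
  have hks : 1 < (k * s).re := by
    rw [← Complex.ofReal_natCast, Complex.re_ofReal_mul]
    nlinarith [show (1 : ℝ) ≤ k by exact_mod_cast Nat.one_le_iff_ne_zero.mpr hk]
  refine (((LSeries_kFreeIndicator_eulerProduct_hasProd hk hs).mul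
    (riemannZeta_eulerProduct_hasProd hks)).congr_fun fun p ↦ ?_).unique
    (riemannZeta_eulerProduct_hasProd hs)
  have hpow : (p : ℂ) ^ (-(k * s)) = ((p : ℂ) ^ (-s)) ^ k := by
    rw [← mul_neg, Complex.cpow_nat_mul]
  have h1 := Complex.one_sub_prime_cpow_ne_zero p.2 hs
  have hk1 := Complex.one_sub_prime_cpow_ne_zero p.2 hks
  rw [hpow] at hk1 ⊢
  rw [eq_mul_inv_iff_mul_eq₀ hk1, inv_mul_eq_iff_eq_mul₀ h1, mul_comm, geom_sum_mul_neg]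

end KFree

section ErrorTerm

variable {k : ℕ}

lemma Rf_eq_sum_sub_mul (k : ℕ) :
    Rf k = fun x ↦ ∑ n ∈ Icc 1 ⌊x⌋₊, kFreeIndicator k n - (riemannZeta k).re⁻¹ * x := by
  classical
  funext x
  simp only [Rf, Qf, kFreeIndicator, sum_boole, div_eq_inv_mul]

lemma measurable_Rf (k : ℕ) : Measurable (Rf k) := by
  rw [Rf_eq_sum_sub_mul]
  exact (measurable_sum_Icc_floor _).sub (by fun_prop)

lemma abs_Rf_le (k : ℕ) {x : ℝ} (hx : 0 ≤ x) : |Rf k x| ≤ (1 + |(riemannZeta k).re⁻¹|) * x := by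
  rw [Rf_eq_sum_sub_mul, add_mul, one_mul]
  refine (abs_sub _ _).trans (add_le_add
    (abs_sum_Icc_floor_le (kFreeIndicator_nonneg k) (kFreeIndicator_le_one k) hx) ?_)
  rw [abs_mul, abs_of_nonneg hx]

lemma riemannZeta_natCast_ne_zero (hk : 1 < k) : riemannZeta k ≠ 0 :=
  riemannZeta_ne_zero_of_one_lt_re (by simpa using hk)

lemma ofReal_re_riemannZeta_natCast (hk : 1 < k) : ((riemannZeta k).re : ℂ) = riemannZeta k :=
  Complex.ext rfl (by simpa using (riemannZeta_im_eq_zero_of_one_lt (Nat.one_lt_cast.mpr hk)).symm)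

/-- The entire function that continues `s (s - 1) ζ₁(k s)` times the truncated Mellin transform of
`Rf k`, where `ζ₁(s) = (s - 1) ζ(s)` is Mathlib's `riemannZeta₁`. -/
noncomputable def kFreeNumerator (k : ℕ) (s : ℂ) : ℂ :=
  (k * s - 1) * riemannZeta₁ s - s * riemannZeta₁ (k * s) / riemannZeta k

lemma differentiable_kFreeNumerator (k : ℕ) : Differentiable ℂ (kFreeNumerator k) := by
  have := differentiable_riemannZeta₁
  unfold kFreeNumerator
  fun_prop

lemma kFreeNumerator_one (hk : 1 < k) : kFreeNumerator k 1 = 0 := by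
  have hζ := riemannZeta_natCast_ne_zero hk
  rw [kFreeNumerator, mul_one, riemannZeta₁_one, riemannZeta₁_of_ne_one (by exact_mod_cast hk.ne')]
  field_simp
  ring

lemma sub_one_mul_dslope_kFreeNumerator (hk : 1 < k) (s : ℂ) :
    (s - 1) * dslope (kFreeNumerator k) 1 s = kFreeNumerator k s := by
  rw [← smul_eq_mul, sub_smul_dslope, kFreeNumerator_one hk, sub_zero]

theorem mul_truncatedMellin_Rf (hk : 1 < k) {s : ℂ} (hs : 1 < s.re) :
    s * riemannZeta₁ (k * s) * truncatedMellin (Rf k) s = dslope (kFreeNumerator k) 1 s := by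
  have hs0 : s ≠ 0 := Complex.ne_zero_of_re_pos (zero_lt_one.trans hs)
  have hs1 : s - 1 ≠ 0 := sub_ne_zero.mpr (by rintro rfl; simp at hs)
  have hks1 : (k : ℂ) * s ≠ 1 := fun h ↦ by
    have hre : (k : ℝ) * s.re = 1 := by simpa using congrArg Complex.re h
    nlinarith [show (1 : ℝ) < k by exact_mod_cast hk]
  have hζ := riemannZeta_natCast_ne_zero hk
  refine mul_left_cancel₀ hs1 ?_
  rw [sub_one_mul_dslope_kFreeNumerator hk, Rf_eq_sum_sub_mul, truncatedMellin_sum_sub_mul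
    (kFreeIndicator_nonneg k) (kFreeIndicator_le_one k) _ hs, Complex.ofReal_inv,
    ofReal_re_riemannZeta_natCast hk, kFreeNumerator, riemannZeta₁_of_ne_one hks1,
    riemannZeta₁_of_ne_one (sub_ne_zero.mp hs1),
    ← LSeries_kFreeIndicator_mul_riemannZeta (zero_lt_one.trans hk).ne' hs]
  field_simp

lemma riemannZeta_div_eq_zero_of_dslope_eq_zero (hk : 1 < k) {ρ : ℂ} (hρ : riemannZeta ρ = 0)
    (hρ1 : ρ.re < 1) (hN : dslope (kFreeNumerator k) 1 (ρ / k) = 0) : riemannZeta (ρ / k) = 0 := by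
  have hk0 : (k : ℂ) ≠ 0 := by exact_mod_cast (zero_lt_one.trans hk).ne'
  have hρ_ne : ρ ≠ 1 := by
    rintro rfl
    simp at hρ1
  have hρk_ne : ρ / k ≠ 1 := by
    rw [Ne, div_eq_one_iff_eq hk0]
    rintro rfl
    exact hρ1.not_gt (by simpa using hk)
  have hρ₁ : riemannZeta₁ ρ = 0 := by rw [riemannZeta₁_of_ne_one hρ_ne, hρ, mul_zero]
  have hnum := sub_one_mul_dslope_kFreeNumerator hk (ρ / k)
  rw [hN, mul_zero, kFreeNumerator, mul_div_cancel₀ ρ hk0, hρ₁, riemannZeta₁_of_ne_one hρk_ne]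
    at hnum
  simpa [sub_ne_zero.mpr hρ_ne, sub_ne_zero.mpr hρk_ne] using hnum.symm

theorem riemannZeta_div_eq_zero_of_one_sided_bound (hk : 1 < k) {θ : ℝ} (hθ : 0 ≤ θ)
    (h : (∃ C : ℝ, ∀ᶠ x in atTop, Rf k x ≤ C * x ^ θ) ∨
      (∃ C : ℝ, ∀ᶠ x in atTop, C * x ^ θ ≤ Rf k x))
    {ρ : ℂ} (hρ : riemannZeta ρ = 0) (hρθ : k * θ < ρ.re) (hρ1 : ρ.re < 1) :
    riemannZeta (ρ / k) = 0 := by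
  have hk0 : (0 : ℝ) < k := by exact_mod_cast zero_lt_one.trans hk
  have hρk : θ < (ρ / k).re := by rwa [Complex.div_natCast_re, lt_div_iff₀' hk0]
  have hbound (x : ℝ) (hx : 1 < x) : |Rf k x| ≤ (1 + |(riemannZeta k).re⁻¹|) * x ^ (1 : ℝ) := by
    simpa using abs_Rf_le k (zero_lt_one.trans hx).le
  have hN : Differentiable ℂ (dslope (kFreeNumerator k) 1) := by
    rw [← differentiableOn_univ, Complex.differentiableOn_dslope univ_mem]
    exact (differentiable_kFreeNumerator k).differentiableOn
  have hD : Differentiable ℂ fun s : ℂ ↦ s * riemannZeta₁ (k * s) := by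
    have := differentiable_riemannZeta₁
    fun_prop
  have hD0 (t : ℝ) (ht : θ < t) : (t : ℂ) * riemannZeta₁ (k * t) ≠ 0 := by
    have ht0 := hθ.trans_lt ht
    refine mul_ne_zero (by exact_mod_cast ht0.ne') ?_
    exact_mod_cast riemannZeta₁_ofReal_ne_zero (mul_pos hk0 ht0)
  have hDρ : ρ / k * riemannZeta₁ (k * (ρ / k)) = 0 := by
    rw [mul_div_cancel₀ ρ (by exact_mod_cast hk0.ne'),
      riemannZeta₁_of_ne_one (by rintro rfl; simp at hρ1), hρ, mul_zero, mul_zero]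
  refine riemannZeta_div_eq_zero_of_dslope_eq_zero hk hρ hρ1 ?_
  rcases h with ⟨C, hC⟩ | ⟨C, hC⟩
  · exact numerator_eq_zero_of_eventually_le (measurable_Rf k) hbound hN.differentiableOn
      hD.differentiableOn hD0 (fun s hs ↦ mul_truncatedMellin_Rf hk hs) hC hρk hDρ
  · exact numerator_eq_zero_of_eventually_ge (measurable_Rf k) hbound hN.differentiableOn
      hD.differentiableOn hD0 (fun s hs ↦ mul_truncatedMellin_Rf hk hs) hC hρk hDρ

theorem R2_one_sided_bound_implies_RH_general (hk : 1 < k) {θ : ℝ} (hθ0 : 0 ≤ θ)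
    (hθk : k * θ ≤ 1 - 1 / k)
    (h : (∃ C : ℝ, ∀ᶠ x in atTop, Rf k x ≤ C * x ^ θ) ∨
      (∃ C : ℝ, ∀ᶠ x in atTop, C * x ^ θ ≤ Rf k x)) :
    ∀ s : ℂ, riemannZeta s = 0 → 0 < s.re → s.re < 1 → s.re ∈ Set.Icc (1 - k * θ) (k * θ) := by
  intro s hs hs0 hs1
  have hle {ρ : ℂ} (hρ : riemannZeta ρ = 0) (hρ1 : ρ.re < 1) : ρ.re ≤ k * θ :=
    le_of_not_gt fun hρθ ↦ riemannZeta_ne_zero_of_forall_div_eq_zero hk (by positivity) hθk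
      (fun _ hw hwθ hw1 ↦ riemannZeta_div_eq_zero_of_one_sided_bound hk hθ0 h hw hwθ hw1)
      hρθ hρ1 hρ
  refine ⟨?_, hle hs hs1⟩
  have := hle (riemannZeta_one_sub_eq_zero hs hs0 hs1) (by simpa using hs0)
  simpa only [Complex.sub_re, Complex.one_re, sub_le_comm] using this

end ErrorTerm

theorem R2_one_sided_bound_implies_RH
    (h : (∃ C : ℝ, 0 < C ∧ ∀ᶠ x : ℝ in atTop, Rf 2 x ≤ C * x ^ ((1 : ℝ) / 4)) ∨
         (∃ C : ℝ, 0 < C ∧ ∀ᶠ x : ℝ in atTop, -C * x ^ ((1 : ℝ) / 4) ≤ Rf 2 x)) :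
    ∀ s : ℂ, riemannZeta s = 0 → 0 < s.re → s.re < 1 → s.re = 1 / 2 := by
  intro s hs hs0 hs1
  obtain ⟨hge, hle⟩ := R2_one_sided_bound_implies_RH_general one_lt_two (by norm_num) (by norm_num)
    (h.imp (.imp fun _ ↦ And.right) fun ⟨C, _, hC⟩ ↦ ⟨-C, hC⟩) s hs hs0 hs1
  norm_num at hge hle
  linarith
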